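/- Up to equivalence, there are exactly two nondegenerate skew-hermitian forms on an n-dimensional Q_{p^2}-vector space V (with respect to the quadratic unramified extension Q_{p^2}/Q_p), represented by the matrices t·I_n and t·J_n, where t ∈ Z_{p^2}^× satisfies t^σ = -t and J_n = diag(p,1,...,1); moreover these two forms are not equivalent. -/

import Mathlib

/-!
Write `R = ℤ_{p²}`, `K = ℚ_{p²}` and `N(x) = x σ(x)`. The proof has an arithmetic and a geometric
half.

*Arithmetic.* Every `σ`-fixed unit of `R` is a norm (`exists_norm_eq`): a Teichmüller lift solves
the equation modulo `p` because the norm `𝔽_{p²}ˣ → 𝔽_pˣ` is surjective, and the remaining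
`σ`-fixed `1`-unit has a `σ`-fixed square root by Hensel's lemma, `p` being odd. Hence every
nonzero `σ`-fixed element of `K` is a norm or `p` times a norm (`norm_class`), while `p` itself is
not a norm since norms have even valuation (`p_not_norm`).

*Geometry.* A nondegenerate form has an anisotropic vector, and rescaling it gives the value `t` or
`t p`. In dimension at least `2` the value `t` itself occurs (`exists_value_t`): two orthogonal
vectors of value `t p` combine to one of value `t` because `p - 1` is a norm. Splitting off vectors
of value `t` until a line is left diagonalizes the form as `t · diag(ε, 1, …, 1)` with `ε ∈ {1, p}`
(`exists_gram`). The two cases are inequivalent because the determinants of equivalent forms differ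
by a norm (`det_of_formEquiv`), and here they differ by `p`.
-/

/-- The ring of integers `ℤ_{p²}` of the unramified quadratic extension of `ℚ_p`,
realized as the Witt vectors of `𝔽_{p²}`. -/
abbrev Zp2 (p : ℕ) [Fact p.Prime] : Type := WittVector p (GaloisField p 2)

/-- The unramified quadratic extension `ℚ_{p²}` of `ℚ_p`, as the fraction field of
`ℤ_{p²}`. -/
abbrev Qp2 (p : ℕ) [Fact p.Prime] : Type := FractionRing (Zp2 p)

/-- The nontrivial Galois automorphism (Frobenius) `σ` of `ℤ_{p²}`. -/
noncomputable def sigmaZ (p : ℕ) [Fact p.Prime] : Zp2 p ≃+* Zp2 p :=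
  WittVector.frobeniusEquiv p (GaloisField p 2)

/-- The nontrivial Galois automorphism `σ` of `ℚ_{p²}`. -/
noncomputable def sigmaQ (p : ℕ) [Fact p.Prime] : Qp2 p ≃+* Qp2 p :=
  IsFractionRing.ringEquivOfRingEquiv (sigmaZ p)

section Forms

variable (p : ℕ) [Fact p.Prime]
variable {V : Type*} [AddCommGroup V] [Module (Qp2 p) V]

/-- `B` is a skew-hermitian form on the `ℚ_{p²}`-vector space `V`: biadditive, linear in
the first variable, `σ`-semilinear in the second, with `{x,y} = -{y,x}^σ`. -/
def IsSkewHermitian (B : V → V → Qp2 p) : Prop :=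
  (∀ x y z, B (x + y) z = B x z + B y z) ∧
  (∀ x y z, B x (y + z) = B x y + B x z) ∧
  (∀ (c : Qp2 p) x y, B (c • x) y = c * B x y) ∧
  (∀ (c : Qp2 p) x y, B x (c • y) = sigmaQ p c * B x y) ∧
  (∀ x y, B x y = -(sigmaQ p (B y x)))

/-- Nondegeneracy of a form. -/
def IsNondeg (B : V → V → Qp2 p) : Prop := ∀ x, (∀ y, B x y = 0) → x = 0

/-- Two forms are equivalent if related by a linear automorphism of `V`. -/
def FormEquiv (B B' : V → V → Qp2 p) : Prop :=
  ∃ g : V ≃ₗ[Qp2 p] V, ∀ x y, B' x y = B (g x) (g y)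

/-- The sesquilinear form associated to a matrix `M`: `(x, y) ↦ ∑ xᵢ Mᵢⱼ σ(yⱼ)`. -/
noncomputable def matForm {n : ℕ} (M : Matrix (Fin n) (Fin n) (Qp2 p)) :
    (Fin n → Qp2 p) → (Fin n → Qp2 p) → Qp2 p :=
  fun x y => ∑ i, ∑ j, x i * M i j * sigmaQ p (y j)

/-- The matrix `t·I_n`. -/
noncomputable def tIn (t : Zp2 p) (n : ℕ) : Matrix (Fin n) (Fin n) (Qp2 p) :=
  algebraMap (Zp2 p) (Qp2 p) t • (1 : Matrix (Fin n) (Fin n) (Qp2 p))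

/-- The matrix `t·J_n`, where `J_n = diag(p, 1, …, 1)`. -/
noncomputable def tJn (t : Zp2 p) (n : ℕ) : Matrix (Fin n) (Fin n) (Qp2 p) :=
  algebraMap (Zp2 p) (Qp2 p) t •
    Matrix.diagonal (fun i : Fin n => if (i : ℕ) = 0 then (p : Qp2 p) else 1)

end Forms

/-- The `R`-module `M` has length `m`, expressed via composition series. -/
def ModuleLengthEq (R : Type*) [Ring R] (M : Type*) [AddCommGroup M] [Module R M]
    (m : ℕ) : Prop :=
  ∃ s : CompositionSeries (Submodule R M), s.head = ⊥ ∧ s.last = ⊤ ∧ s.length = m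

section Lattices

variable (R K : Type*) [CommRing R] [CommRing K] [Algebra R K]
variable {V : Type*} [AddCommGroup V] [Module K V] [Module R V] [IsScalarTower R K V]

/-- `L` is an `R`-lattice in the `K`-vector space `V`: finitely generated over `R` and
spanning `V` over `K`. -/
def IsLatticeG (L : Submodule R V) : Prop :=
  L.FG ∧ Submodule.span K (L : Set V) = ⊤

/-- The dual lattice `L^∨ = {y : B(y, L) ⊆ R}` of `L` with respect to a form `B` which is
additive and `K`-linear in the first variable. -/
noncomputable def dualLatticeG (B : V → V → K)
    (hadd : ∀ x y z, B (x + y) z = B x z + B y z)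
    (hsmul : ∀ (c : K) x y, B (c • x) y = c * B x y)
    (L : Submodule R V) : Submodule R V where
  carrier := {y | ∀ x ∈ L, B y x ∈ (algebraMap R K).range}
  zero_mem' := by
    intro x _
    have h : B ((0 : K) • (0 : V)) x = 0 * B 0 x := hsmul 0 0 x
    rw [zero_smul, zero_mul] at h
    exact h ▸ Subring.zero_mem _
  add_mem' := by
    intro a b ha hb x hx
    rw [hadd a b x]
    exact Subring.add_mem _ (ha x hx) (hb x hx)
  smul_mem' := by
    intro c y hy x hx
    have h : c • y = (algebraMap R K c) • y := (algebraMap_smul K c y).symm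
    rw [h, hsmul]
    exact Subring.mul_mem _ ⟨c, rfl⟩ (hy x hx)

/-- Scaling of an `R`-submodule of `V` by a scalar `c ∈ K`. -/
noncomputable def scaleLatG (c : K) (L : Submodule R V) : Submodule R V :=
  L.map ((c • (LinearMap.id : V →ₗ[K] V)).restrictScalars R)

/-- `HasIndexG R K L L' m` says `L ⊆ L'` and the quotient `L'/L` has length `m` as an
`R`-module (the index of `L` in `L'` is `m`). -/
def HasIndexG (L L' : Submodule R V) (m : ℕ) : Prop :=
  L ≤ L' ∧ ModuleLengthEq R (↥L' ⧸ Submodule.comap L'.subtype L) m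

end Lattices

namespace SkewHermitian

/-! ### Norms from the unramified quadratic extension -/

section Arithmetic

variable {p : ℕ} [Fact p.Prime]

lemma galoisField_pow_sq (x : GaloisField p 2) : (x ^ p) ^ p = x := by
  have := Fintype.ofFinite (GaloisField p 2)
  have h := FiniteField.pow_card x
  rw [← Nat.card_eq_fintype_card, GaloisField.card p 2 two_ne_zero] at h
  rw [← pow_mul, ← sq, h]

lemma sigmaZ_coeff (x : Zp2 p) (i : ℕ) : (sigmaZ p x).coeff i = x.coeff i ^ p :=
  WittVector.coeff_frobenius_charP p x i

lemma sigmaZ_sigmaZ (x : Zp2 p) : sigmaZ p (sigmaZ p x) = x := by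
  ext i
  rw [sigmaZ_coeff, sigmaZ_coeff, galoisField_pow_sq]

lemma sigmaQ_algebraMap (x : Zp2 p) :
    sigmaQ p (algebraMap (Zp2 p) (Qp2 p) x) = algebraMap (Zp2 p) (Qp2 p) (sigmaZ p x) :=
  IsFractionRing.ringEquivOfRingEquiv_algebraMap (sigmaZ p) x

lemma sigmaQ_sigmaQ (x : Qp2 p) : sigmaQ p (sigmaQ p x) = x := by
  obtain ⟨a, b, -, rfl⟩ := IsFractionRing.div_surjective (A := Zp2 p) x
  simp only [map_div₀, sigmaQ_algebraMap, sigmaZ_sigmaZ]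

/-- The norm `𝔽_{p²}ˣ → 𝔽_pˣ`, `c ↦ c^{p+1}`, is surjective; `𝔽_pˣ` is cut out by the
equation `u^p = u`. -/
lemma exists_pow_succ_eq (u : GaloisField p 2) (hu : u ≠ 0) (h : u ^ p = u) :
    ∃ c : GaloisField p 2, c ≠ 0 ∧ c ^ (p + 1) = u := by
  have hp1 : 1 < p := (Fact.out : p.Prime).one_lt
  obtain ⟨g, hg⟩ := IsCyclic.exists_generator (α := (GaloisField p 2)ˣ)
  have hord : orderOf g = (p + 1) * (p - 1) := by
    rw [orderOf_eq_card_of_forall_mem_zpowers hg, Nat.card_units,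
      GaloisField.card p 2 two_ne_zero, ← Nat.sq_sub_sq, one_pow]
  obtain ⟨k, hk⟩ := (mem_powers_iff_mem_zpowers.mpr (hg (Units.mk0 u hu)) :)
  have hk' : g ^ k = Units.mk0 u hu := hk
  have h1 : (Units.mk0 u hu) ^ (p - 1) = 1 := by
    apply mul_right_cancel (b := Units.mk0 u hu)
    rw [← pow_succ, Nat.sub_add_cancel hp1.le, one_mul]
    ext
    simpa using h
  rw [← hk', ← pow_mul] at h1
  have hd := orderOf_dvd_of_pow_eq_one h1
  rw [hord] at hd
  obtain ⟨m, rfl⟩ := Nat.dvd_of_mul_dvd_mul_right (by omega) hd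
  refine ⟨(g ^ m : (GaloisField p 2)ˣ), Units.ne_zero _, ?_⟩
  rw [← Units.val_pow_eq_pow_val, ← pow_mul, mul_comm m, hk', Units.val_mk0]

lemma isUnit_iff_coeff_zero (x : Zp2 p) : IsUnit x ↔ x.coeff 0 ≠ 0 := by
  refine ⟨fun h => ?_, WittVector.isUnit_of_coeff_zero_ne_zero x⟩
  exact (h.map (WittVector.constantCoeff (p := p) (R := GaloisField p 2))).ne_zero

lemma isUnit_two (hp : Odd p) : IsUnit (2 : Zp2 p) := by
  rw [isUnit_iff_coeff_zero]
  have h : (2 : Zp2 p).coeff 0 = 2 := map_ofNat WittVector.constantCoeff 2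
  rw [h]
  apply Ring.two_ne_zero
  rw [ringChar.eq (GaloisField p 2) p]
  rintro rfl
  exact absurd hp (by decide)

lemma p_ne_zero : (p : Zp2 p) ≠ 0 := (WittVector.irreducible p).ne_zero

/-- Hensel's lemma for `X² - u`. -/
lemma exists_sq_eq (hp : Odd p) (u : Zp2 p) (hu : u.coeff 0 = 1) :
    ∃ v : Zp2 p, v ^ 2 = u ∧ v.coeff 0 = 1 := by
  have hmem : ∀ x : Zp2 p, x.coeff 0 = 1 → 1 - x ∈ Ideal.span {(p : Zp2 p)} := by
    intro x hx
    rw [WittVector.mem_span_p_iff_coeff_zero_eq_zero]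
    have : (1 - x).coeff 0 = (1 : Zp2 p).coeff 0 - x.coeff 0 :=
      map_sub WittVector.constantCoeff 1 x
    rw [this, hx, WittVector.one_coeff_zero, sub_self]
  obtain ⟨v, hv, hv1⟩ := HenselianRing.is_henselian (I := Ideal.span {(p : Zp2 p)})
    (Polynomial.X ^ 2 - Polynomial.C u) (Polynomial.monic_X_pow_sub_C u two_ne_zero) 1
    (by simpa using hmem u hu)
    (by
      apply IsUnit.map
      simpa [one_add_one_eq_two] using isUnit_two hp)
  refine ⟨v, ?_, ?_⟩
  · simpa [sub_eq_zero] using hv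
  · rw [WittVector.mem_span_p_iff_coeff_zero_eq_zero] at hv1
    have : (v - 1).coeff 0 = v.coeff 0 - (1 : Zp2 p).coeff 0 :=
      map_sub WittVector.constantCoeff v 1
    rw [this, WittVector.one_coeff_zero, sub_eq_zero] at hv1
    exact hv1

/-- The norm from `ℤ_{p²}ˣ` to `ℤ_pˣ` is surjective: a Teichmüller lift solves the equation
modulo `p`, and what is left is a `1`-unit of `ℤ_p`, whose square root lies in `ℤ_p`. -/
lemma exists_norm_eq (hp : Odd p) (u : Zp2 p) (hu : IsUnit u) (hσ : sigmaZ p u = u) :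
    ∃ w : Zp2 p, w * sigmaZ p w = u := by
  have hu0 := (isUnit_iff_coeff_zero u).1 hu
  obtain ⟨c, hc0, hc⟩ := exists_pow_succ_eq (u.coeff 0) hu0 (by rw [← sigmaZ_coeff, hσ])
  set w₀ : Zp2 p := WittVector.teichmuller p c with hw₀
  have hw0c : w₀.coeff 0 = c := WittVector.teichmuller_coeff_zero p c
  have hw₀u : IsUnit w₀ := by rw [isUnit_iff_coeff_zero, hw0c]; exact hc0
  have hN : IsUnit (w₀ * sigmaZ p w₀) := hw₀u.mul (hw₀u.map (sigmaZ p))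
  obtain ⟨u', hu'⟩ := hN.dvd (a := u)
  have hσu' : sigmaZ p u' = u' := by
    apply hN.mul_left_cancel
    rw [← hu']
    conv_rhs => rw [← hσ, hu']
    rw [map_mul, map_mul, sigmaZ_sigmaZ]
    ring
  have hu'0 : u'.coeff 0 = 1 := by
    have h := congrArg (fun x : Zp2 p => x.coeff 0) hu'
    simp only [WittVector.mul_coeff_zero, sigmaZ_coeff, hw0c] at h
    rw [← hc, ← pow_succ'] at h
    exact (mul_eq_left₀ (pow_ne_zero _ hc0)).1 h.symm
  obtain ⟨v, hv, hv0⟩ := exists_sq_eq hp u' hu'0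
  have hσv : sigmaZ p v = v := by
    have hsq : sigmaZ p v ^ 2 = v ^ 2 := by rw [← map_pow, hv, hσu']
    rcases sq_eq_sq_iff_eq_or_eq_neg.1 hsq with h | h
    · exact h
    · exfalso
      -- the sign `-1` is excluded modulo `p`
      have h2 : (2 * v).coeff 0 = 0 := by
        have hv2 : 2 * v = v - -v := by ring
        rw [hv2, ← h]
        have : (v - sigmaZ p v).coeff 0 = v.coeff 0 - (sigmaZ p v).coeff 0 :=
          map_sub WittVector.constantCoeff v _
        rw [this, sigmaZ_coeff, hv0, one_pow, sub_self]
      have hv1 : IsUnit v := by rw [isUnit_iff_coeff_zero, hv0]; exact one_ne_zero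
      exact (isUnit_iff_coeff_zero _).1 ((isUnit_two hp).mul hv1) h2
  refine ⟨w₀ * v, ?_⟩
  rw [map_mul, hσv, hu', ← hv]
  ring

lemma sigmaZ_p : sigmaZ p (p : Zp2 p) = p := map_natCast _ _

lemma sigmaQ_p : sigmaQ p (p : Qp2 p) = p := map_natCast _ _

lemma p_ne_zero' : (p : Qp2 p) ≠ 0 := by
  have h : (p : Qp2 p) = algebraMap (Zp2 p) (Qp2 p) p := (map_natCast _ _).symm
  rw [h]
  exact (map_ne_zero_iff _ (IsFractionRing.injective (Zp2 p) (Qp2 p))).2 p_ne_zero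

/-- `ℚ_pˣ` modulo norms from `ℚ_{p²}ˣ` is generated by the class of `p`. -/
lemma norm_class (hp : Odd p) (a : Qp2 p) (ha : a ≠ 0) (hσ : sigmaQ p a = a) :
    ∃ c : Qp2 p, a = c * sigmaQ p c ∨ a = p * (c * sigmaQ p c) := by
  obtain ⟨x, y, hy, rfl⟩ := IsFractionRing.div_surjective (A := Zp2 p) a
  have hinj := IsFractionRing.injective (Zp2 p) (Qp2 p)
  have hy0 : y ≠ 0 := nonZeroDivisors.ne_zero hy
  have hx0 : x ≠ 0 := by
    rintro rfl
    simp at ha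
  have hσy0 : sigmaZ p y ≠ 0 := (map_ne_zero_iff _ (sigmaZ p).injective).2 hy0
  have hyK : algebraMap (Zp2 p) (Qp2 p) y ≠ 0 := (map_ne_zero_iff _ hinj).2 hy0
  have hσyK : algebraMap (Zp2 p) (Qp2 p) (sigmaZ p y) ≠ 0 := (map_ne_zero_iff _ hinj).2 hσy0
  -- `x / y = x σ(y) / N(y)` reduces to the integral element `x σ(y)`
  obtain ⟨m, u, hmu⟩ := WittVector.exists_eq_pow_p_mul' (x * sigmaZ p y) (mul_ne_zero hx0 hσy0)
  have hfix : sigmaZ p (x * sigmaZ p y) = x * sigmaZ p y := by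
    apply hinj
    rw [map_div₀, sigmaQ_algebraMap, sigmaQ_algebraMap, div_eq_div_iff hσyK hyK] at hσ
    rw [map_mul, sigmaZ_sigmaZ, map_mul, map_mul, hσ]
  have hσu : sigmaZ p u = u := by
    rw [hmu, map_mul, map_pow, sigmaZ_p] at hfix
    exact mul_left_cancel₀ (pow_ne_zero _ p_ne_zero) hfix
  obtain ⟨w, hw⟩ := exists_norm_eq hp u u.isUnit hσu
  have hxy : algebraMap (Zp2 p) (Qp2 p) x / algebraMap (Zp2 p) (Qp2 p) y =
      (p : Qp2 p) ^ m * (algebraMap _ (Qp2 p) w * sigmaQ p (algebraMap _ (Qp2 p) w)) /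
        (algebraMap _ (Qp2 p) y * sigmaQ p (algebraMap _ (Qp2 p) y)) := by
    have h := congrArg (algebraMap (Zp2 p) (Qp2 p)) hmu
    rw [← hw, map_mul, map_mul, map_mul, map_pow, map_natCast] at h
    rw [sigmaQ_algebraMap, sigmaQ_algebraMap, ← h]
    field_simp
  rw [hxy]
  obtain ⟨j, rfl | rfl⟩ := m.even_or_odd'
  · refine ⟨p ^ j * algebraMap _ (Qp2 p) w / algebraMap _ (Qp2 p) y, Or.inl ?_⟩
    rw [map_div₀, map_mul, map_pow, sigmaQ_p, div_mul_div_comm]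
    congr 1
    ring
  · refine ⟨p ^ j * algebraMap _ (Qp2 p) w / algebraMap _ (Qp2 p) y, Or.inr ?_⟩
    rw [map_div₀, map_mul, map_pow, sigmaQ_p, div_mul_div_comm, mul_div_assoc']
    congr 1
    ring

/-- `p` is not a norm from `ℚ_{p²}`, because norms have even valuation. -/
lemma p_not_norm (d : Qp2 p) : (p : Qp2 p) ≠ d * sigmaQ p d := by
  intro h
  obtain ⟨x, y, hy, rfl⟩ := IsFractionRing.div_surjective (A := Zp2 p) d
  have hinj := IsFractionRing.injective (Zp2 p) (Qp2 p)
  have hy0 : y ≠ 0 := nonZeroDivisors.ne_zero hy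
  have hyK : algebraMap (Zp2 p) (Qp2 p) y ≠ 0 := (map_ne_zero_iff _ hinj).2 hy0
  have hσyK : algebraMap (Zp2 p) (Qp2 p) (sigmaZ p y) ≠ 0 :=
    (map_ne_zero_iff _ hinj).2 ((map_ne_zero_iff _ (sigmaZ p).injective).2 hy0)
  have hx0 : x ≠ 0 := by
    rintro rfl
    simp [p_ne_zero'] at h
  have hR : (p : Zp2 p) * (y * sigmaZ p y) = x * sigmaZ p x := by
    apply hinj
    rw [map_div₀, sigmaQ_algebraMap, sigmaQ_algebraMap, div_mul_div_comm,
      eq_div_iff (mul_ne_zero hyK hσyK)] at h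
    simpa only [map_mul, map_natCast] using h
  obtain ⟨k, v, rfl⟩ := WittVector.exists_eq_pow_p_mul' y hy0
  obtain ⟨m, u, rfl⟩ := WittVector.exists_eq_pow_p_mul' x hx0
  simp only [map_mul, map_pow, sigmaZ_p] at hR
  have hA : Associated ((p : Zp2 p) ^ (2 * k + 1)) ((p : Zp2 p) ^ (2 * m)) := by
    refine ((associated_mul_unit_right _ _ (v.isUnit.mul (v.isUnit.map (sigmaZ p)))).trans
      (Associated.of_eq ?_)).trans
      (associated_mul_unit_left _ _ (u.isUnit.mul (u.isUnit.map (sigmaZ p))))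
    linear_combination hR
  have h1 := (pow_dvd_pow_iff p_ne_zero (WittVector.irreducible p).not_isUnit).1 hA.dvd
  have h2 := (pow_dvd_pow_iff p_ne_zero (WittVector.irreducible p).not_isUnit).1 hA.symm.dvd
  omega

end Arithmetic

/-! ### Diagonalization of skew-hermitian forms -/

section Diagonalization

variable {p : ℕ} [Fact p.Prime]

/-- The `i`-th entry of `diag(ε, 1, …, 1)`, which is `I_n` for `ε = 1` and `J_n` for `ε = p`. -/
noncomputable def diagEntry (ε : Qp2 p) (i : ℕ) : Qp2 p := if i = 0 then ε else 1

/-- The linear functional `B(·, v)`; its kernel is the orthogonal complement of `v`. -/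
def leftFunctional {V : Type*} [AddCommGroup V] [Module (Qp2 p) V] {B : V → V → Qp2 p}
    (hB : IsSkewHermitian p B) (v : V) : V →ₗ[Qp2 p] Qp2 p where
  toFun x := B x v
  map_add' x y := hB.1 x y v
  map_smul' c x := hB.2.2.1 c x v

section

variable {V : Type*} [AddCommGroup V] [Module (Qp2 p) V] {B : V → V → Qp2 p}

lemma algebraMap_ne_zero {t : Zp2 p} (ht : IsUnit t) : algebraMap (Zp2 p) (Qp2 p) t ≠ 0 :=
  (ht.map (algebraMap (Zp2 p) (Qp2 p))).ne_zero

lemma sigmaQ_t {t : Zp2 p} (htsk : sigmaZ p t = -t) :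
    sigmaQ p (algebraMap (Zp2 p) (Qp2 p) t) = -algebraMap (Zp2 p) (Qp2 p) t := by
  rw [sigmaQ_algebraMap, htsk, map_neg]

lemma two_ne_zero_Qp2 (hp : Odd p) : (2 : Qp2 p) ≠ 0 := by
  have h := algebraMap_ne_zero (isUnit_two (p := p) hp)
  rwa [map_ofNat] at h

lemma isSkewHermitian_zero_left (hB : IsSkewHermitian p B) (y : V) : B 0 y = 0 :=
  map_zero (leftFunctional hB y)

/-- If `B(v, v) = 0` for all `v`, then `B(x, y)` and `t · B(x, y)` would both be fixed by `σ`,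
which forces `B = 0`. -/
lemma exists_anisotropic (hp : Odd p) {t : Zp2 p} (ht : IsUnit t) (htsk : sigmaZ p t = -t)
    [Nontrivial V] (hB : IsSkewHermitian p B) (hN : IsNondeg p B) : ∃ v, B v v ≠ 0 := by
  by_contra! h
  obtain ⟨x, hx⟩ := exists_ne (0 : V)
  apply hx
  apply hN x
  have hfix : ∀ x y, sigmaQ p (B x y) = B x y := by
    intro x y
    have h1 := h (x + y)
    rw [hB.1, hB.2.1, hB.2.1, h x, h y, hB.2.2.2.2 y x] at h1
    linear_combination -h1
  intro y
  have h1 := hfix (algebraMap (Zp2 p) (Qp2 p) t • x) y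
  rw [hB.2.2.1, map_mul, sigmaQ_t htsk, hfix] at h1
  have h2 : 2 * (algebraMap (Zp2 p) (Qp2 p) t * B x y) = 0 := by linear_combination -h1
  simpa [two_ne_zero_Qp2 hp, algebraMap_ne_zero ht] using h2

/-- Rescaling an anisotropic vector moves `B(v, v) / t ∈ ℚ_pˣ` within its class modulo norms. -/
lemma exists_normalized (hp : Odd p) {t : Zp2 p} (ht : IsUnit t) (htsk : sigmaZ p t = -t)
    [Nontrivial V] (hB : IsSkewHermitian p B) (hN : IsNondeg p B) :
    ∃ v, B v v = algebraMap (Zp2 p) (Qp2 p) t ∨ B v v = algebraMap (Zp2 p) (Qp2 p) t * p := by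
  obtain ⟨v, hv⟩ := exists_anisotropic hp ht htsk hB hN
  have hT := algebraMap_ne_zero ht
  obtain ⟨c, hc⟩ := norm_class hp (B v v / algebraMap (Zp2 p) (Qp2 p) t) (div_ne_zero hv hT) (by
    have h1 : sigmaQ p (B v v) = - B v v := by linear_combination hB.2.2.2.2 v v
    rw [map_div₀, sigmaQ_t htsk, h1, neg_div_neg_eq])
  have hc0 : c ≠ 0 := by
    rintro rfl
    simp [hv, hT] at hc
  have hσc0 : sigmaQ p c ≠ 0 := (map_ne_zero_iff _ (sigmaQ p).injective).2 hc0
  refine ⟨c⁻¹ • v, ?_⟩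
  rw [hB.2.2.1, hB.2.2.2.1, map_inv₀]
  refine hc.imp (fun h => ?_) (fun h => ?_)
  · rw [div_eq_iff hT] at h
    rw [h]
    field_simp
  · rw [div_eq_iff hT] at h
    rw [h]
    field_simp

lemma isSkewHermitian_restrict (hB : IsSkewHermitian p B) (W : Submodule (Qp2 p) V) :
    IsSkewHermitian p (fun x y : W => B x y) :=
  ⟨fun x y z => hB.1 x y z, fun x y z => hB.2.1 x y z, fun c x y => hB.2.2.1 c x y,
    fun c x y => hB.2.2.2.1 c x y, fun x y => hB.2.2.2.2 x y⟩

lemma isNondeg_restrict (hB : IsSkewHermitian p B) (hN : IsNondeg p B) {v : V}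
    (hv : B v v ≠ 0) :
    IsNondeg p (fun x y : LinearMap.ker (leftFunctional hB v) => B x y) := by
  intro x hx
  apply Subtype.ext
  apply hN
  intro y
  have hxv : B x v = 0 := x.2
  -- the orthogonal projection of `y` away from `v`
  have hy : y + (-(B y v / B v v)) • v ∈ LinearMap.ker (leftFunctional hB v) := by
    change B _ v = 0
    rw [hB.1, hB.2.2.1]
    field_simp
    ring
  have h := hx ⟨_, hy⟩
  simp only at h
  rwa [hB.2.1, hB.2.2.2.1, hxv, mul_zero, add_zero] at h

lemma finrank_perp [FiniteDimensional (Qp2 p) V] (hB : IsSkewHermitian p B) {v : V}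
    (hv : B v v ≠ 0) :
    Module.finrank (Qp2 p) (LinearMap.ker (leftFunctional hB v)) + 1 =
      Module.finrank (Qp2 p) V :=
  Module.Dual.finrank_ker_add_one_of_ne_zero (f := leftFunctional hB v)
    (fun h => hv (LinearMap.congr_fun h v))

/-- In dimension at least `2` the form represents `t`: if two orthogonal vectors `v`, `w` both
have value `t p`, then `N(β) = p - 1` gives `B(v + β w, v + β w) = t p²`. -/
lemma exists_value_t (hp : Odd p) {t : Zp2 p} (ht : IsUnit t) (htsk : sigmaZ p t = -t)
    [FiniteDimensional (Qp2 p) V] (hdim : 2 ≤ Module.finrank (Qp2 p) V)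
    (hB : IsSkewHermitian p B) (hN : IsNondeg p B) :
    ∃ v, B v v = algebraMap (Zp2 p) (Qp2 p) t := by
  have hT := algebraMap_ne_zero ht
  have : Nontrivial V := Module.nontrivial_of_finrank_pos (R := Qp2 p) (by omega)
  obtain ⟨v, hv | hv⟩ := exists_normalized hp ht htsk hB hN
  · exact ⟨v, hv⟩
  have hv0 : B v v ≠ 0 := by rw [hv]; exact mul_ne_zero hT p_ne_zero'
  have hfr := finrank_perp hB hv0
  have : Nontrivial (LinearMap.ker (leftFunctional hB v)) :=
    Module.nontrivial_of_finrank_pos (R := Qp2 p) (by omega)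
  obtain ⟨⟨w, hwv⟩, hw⟩ := exists_normalized hp ht htsk (isSkewHermitian_restrict hB _)
    (isNondeg_restrict hB hN hv0)
  simp only at hw
  obtain hw | hw := hw
  · exact ⟨w, hw⟩
  have hwv' : B w v = 0 := hwv
  have hvw : B v w = 0 := by rw [hB.2.2.2.2, hwv', map_zero, neg_zero]
  have hunit : IsUnit ((p : Zp2 p) - 1) := by
    rw [isUnit_iff_coeff_zero]
    have h : ((p : Zp2 p) - 1).coeff 0 = (p : GaloisField p 2) - 1 := by
      change WittVector.constantCoeff ((p : Zp2 p) - 1) = _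
      rw [map_sub, map_natCast, map_one]
    rw [h, CharP.cast_eq_zero, zero_sub]
    exact neg_ne_zero.2 one_ne_zero
  obtain ⟨β, hβ⟩ := exists_norm_eq hp _ hunit (by rw [map_sub, sigmaZ_p, map_one])
  have hβ' := congrArg (algebraMap (Zp2 p) (Qp2 p)) hβ
  rw [map_mul, map_sub, map_natCast, map_one] at hβ'
  refine ⟨(p : Qp2 p)⁻¹ • (v + algebraMap (Zp2 p) (Qp2 p) β • w), ?_⟩
  rw [hB.2.2.1, hB.2.2.2.1, hB.1, hB.2.1, hB.2.1, hB.2.2.1, hB.2.2.1, hB.2.2.2.1, hB.2.2.2.1, hvw,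
    hwv', hv, hw, map_inv₀, sigmaQ_p, sigmaQ_algebraMap]
  have hp0 := p_ne_zero' (p := p)
  field_simp
  linear_combination (p * algebraMap (Zp2 p) (Qp2 p) t) * hβ'

end

/-- Every nondegenerate form has a family of `n + 1` vectors with Gram matrix
`t · diag(ε, 1, …, 1)`, where `ε ∈ {1, p}`: split off vectors of value `t` until the dimension
is `1`. -/
lemma exists_gram (hp : Odd p) {t : Zp2 p} (ht : IsUnit t) (htsk : sigmaZ p t = -t) (n : ℕ) :
    ∀ (V : Type) [AddCommGroup V] [Module (Qp2 p) V] [FiniteDimensional (Qp2 p) V]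
      (B : V → V → Qp2 p), Module.finrank (Qp2 p) V = n + 1 → IsSkewHermitian p B →
      IsNondeg p B →
      ∃ (ε : Qp2 p) (b : Fin (n + 1) → V), (ε = 1 ∨ ε = p) ∧
        ∀ i j, B (b i) (b j) =
          if i = j then algebraMap (Zp2 p) (Qp2 p) t * diagEntry ε i else 0 := by
  have hT := algebraMap_ne_zero ht
  induction n with
  | zero =>
    intro V _ _ _ B hV hB hN
    have : Nontrivial V := Module.nontrivial_of_finrank_pos (R := Qp2 p) (by omega)
    obtain ⟨v, hv⟩ := exists_normalized hp ht htsk hB hN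
    have key : ∀ i j : Fin (0 + 1), i = j ∧ (i : ℕ) = 0 := fun i j =>
      ⟨by ext; omega, by omega⟩
    obtain hv | hv := hv
    · refine ⟨1, fun _ => v, Or.inl rfl, fun i j => ?_⟩
      rw [if_pos (key i j).1, diagEntry, if_pos (key i j).2, hv, mul_one]
    · refine ⟨p, fun _ => v, Or.inr rfl, fun i j => ?_⟩
      rw [if_pos (key i j).1, diagEntry, if_pos (key i j).2, hv]
  | succ n ih =>
    intro V _ _ _ B hV hB hN
    obtain ⟨v, hv⟩ := exists_value_t hp ht htsk (by omega) hB hN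
    have hv0 : B v v ≠ 0 := by rw [hv]; exact hT
    have hfr := finrank_perp hB hv0
    obtain ⟨ε, b, hε, hb⟩ := ih (LinearMap.ker (leftFunctional hB v)) _ (by omega)
      (isSkewHermitian_restrict hB _) (isNondeg_restrict hB hN hv0)
    have hbv : ∀ i, B (b i) v = 0 := fun i => (b i).2
    have hvb : ∀ i, B v (b i) = 0 := fun i => by
      rw [hB.2.2.2.2, hbv, map_zero, neg_zero]
    refine ⟨ε, Fin.snoc (fun i => (b i : V)) v, hε, fun i j => ?_⟩
    -- the new vector comes last, so that the exceptional entry stays in position `0`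
    induction i using Fin.lastCases with
    | last =>
      induction j using Fin.lastCases with
      | last => simp [hv, diagEntry]
      | cast j =>
        rw [Fin.snoc_last, Fin.snoc_castSucc, hvb, if_neg (Fin.castSucc_lt_last j).ne']
    | cast i =>
      induction j using Fin.lastCases with
      | last =>
        rw [Fin.snoc_last, Fin.snoc_castSucc, hbv, if_neg (Fin.castSucc_lt_last i).ne]
      | cast j =>
        rw [Fin.snoc_castSucc, Fin.snoc_castSucc]
        have h := hb i j
        rw [h]
        simp [Fin.castSucc_inj]

lemma form_sum_left {V : Type*} [AddCommGroup V] [Module (Qp2 p) V] {B : V → V → Qp2 p}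
    (hB : IsSkewHermitian p B) {ι : Type*} [Fintype ι] (b : ι → V) (c : ι → Qp2 p) (y : V) :
    B (∑ i, c i • b i) y = ∑ i, c i * B (b i) y := by
  have h := map_sum (leftFunctional hB y) (fun i => c i • b i) Finset.univ
  refine h.trans (Finset.sum_congr rfl fun i _ => hB.2.2.1 _ _ _)

lemma form_sum_right {V : Type*} [AddCommGroup V] [Module (Qp2 p) V] {B : V → V → Qp2 p}
    (hB : IsSkewHermitian p B) {ι : Type*} [Fintype ι] (b : ι → V) (c : ι → Qp2 p) (x : V) :
    B x (∑ i, c i • b i) = ∑ i, sigmaQ p (c i) * B x (b i) := by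
  rw [hB.2.2.2.2, form_sum_left hB, map_sum, ← Finset.sum_neg_distrib]
  refine Finset.sum_congr rfl fun i _ => ?_
  rw [map_mul, hB.2.2.2.2 x (b i), mul_neg]

/-- A family with invertible diagonal Gram matrix is a basis, and the coordinate map identifies
the form with the matrix form. -/
lemma formEquiv_of_gram {n : ℕ} {B : (Fin n → Qp2 p) → (Fin n → Qp2 p) → Qp2 p}
    (hB : IsSkewHermitian p B) (d : Fin n → Qp2 p) (hd : ∀ i, d i ≠ 0)
    (b : Fin n → Fin n → Qp2 p) (hb : ∀ i j, B (b i) (b j) = if i = j then d i else 0) :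
    FormEquiv p B (matForm p (Matrix.diagonal d)) := by
  have hli : LinearIndependent (Qp2 p) b := by
    rw [Fintype.linearIndependent_iff]
    intro c hc j
    have h := form_sum_left hB b c (b j)
    rw [hc, isSkewHermitian_zero_left hB] at h
    simp only [hb, mul_ite, mul_zero, Finset.sum_ite_eq', Finset.mem_univ, if_true] at h
    exact (mul_eq_zero.1 h.symm).resolve_right (hd j)
  have hfr : Fintype.card (Fin n) = Module.finrank (Qp2 p) (Fin n → Qp2 p) := by simp
  let e := basisOfLinearIndependentOfCardEqFinrank' b hli hfr
  have he : ∀ i, e i = b i := fun i => by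
    simp [e]
  refine ⟨e.equivFun.symm, fun x y => ?_⟩
  simp only [Module.Basis.equivFun_symm_apply, he]
  rw [form_sum_left hB]
  refine Finset.sum_congr rfl fun i _ => ?_
  rw [form_sum_right hB, Finset.mul_sum]
  refine Finset.sum_congr rfl fun j _ => ?_
  rw [hb, Matrix.diagonal_apply]
  ring

end Diagonalization

/-! ### Determinants -/

section Determinant

variable {p : ℕ} [Fact p.Prime]

lemma matForm_eq {n : ℕ} (M : Matrix (Fin n) (Fin n) (Qp2 p)) (x y : Fin n → Qp2 p) :
    matForm p M x y = ∑ i, ∑ j, x i * M i j * sigmaQ p (y j) := rfl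

/-- Equivalent matrix forms have determinants differing by a norm. -/
lemma det_of_formEquiv {n : ℕ} {M M' : Matrix (Fin n) (Fin n) (Qp2 p)}
    (h : FormEquiv p (matForm p M) (matForm p M')) :
    ∃ d : Qp2 p, M'.det = d * sigmaQ p d * M.det := by
  obtain ⟨g, hg⟩ := h
  let A : Matrix (Fin n) (Fin n) (Qp2 p) := Matrix.of fun i => g (Pi.single i 1)
  have hA : M' = A * M * ((sigmaQ p : Qp2 p →+* Qp2 p).mapMatrix A).transpose := by
    ext i j
    have h1 := hg (Pi.single i 1) (Pi.single j 1)
    have h2 : matForm p M' (Pi.single i 1) (Pi.single j 1) = M' i j := by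
      rw [matForm_eq, Finset.sum_eq_single i, Finset.sum_eq_single j]
      · simp
      · intro k _ hk
        simp [Pi.single_eq_of_ne hk]
      · simp
      · intro k _ hk
        simp [Pi.single_eq_of_ne hk]
      · simp
    rw [← h2, h1, matForm_eq, Finset.sum_comm, Matrix.mul_apply]
    refine Finset.sum_congr rfl fun k _ => ?_
    rw [Matrix.mul_apply, Finset.sum_mul]
    rfl
  refine ⟨A.det, ?_⟩
  rw [hA, Matrix.det_mul, Matrix.det_mul, Matrix.det_transpose, ← RingHom.map_det]
  simp only [RingEquiv.coe_toRingHom]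
  ring

lemma diagonal_form {t : Zp2 p} {n : ℕ} :
    tIn p t n = Matrix.diagonal (fun i : Fin n => algebraMap (Zp2 p) (Qp2 p) t * diagEntry 1 i) ∧
    tJn p t n = Matrix.diagonal (fun i : Fin n => algebraMap (Zp2 p) (Qp2 p) t * diagEntry p i) := by
  constructor
  · rw [tIn, Matrix.smul_one_eq_diagonal]
    simp [diagEntry]
  · rw [tJn, ← Matrix.diagonal_smul]
    rfl

end Determinant

end SkewHermitian

/-- Up to equivalence there are exactly two nondegenerate skew-hermitian forms on an
`n`-dimensional `ℚ_{p²}`-vector space, represented by the matrices `t·I_n` and `t·J_n`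
(`t ∈ ℤ_{p²}^×` with `t^σ = -t`, `J_n = diag(p,1,…,1)`); moreover these two forms are not
equivalent. -/
theorem two_skew_hermitian_forms (p : ℕ) [Fact p.Prime] (hp : Odd p) (n : ℕ) (hn : 0 < n)
    (t : Zp2 p) (ht : IsUnit t) (htsk : sigmaZ p t = -t) :
    (∀ B : (Fin n → Qp2 p) → (Fin n → Qp2 p) → Qp2 p,
        IsSkewHermitian p B → IsNondeg p B →
          FormEquiv p B (matForm p (tIn p t n)) ∨ FormEquiv p B (matForm p (tJn p t n))) ∧
      ¬ FormEquiv p (matForm p (tIn p t n)) (matForm p (tJn p t n)) := by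
  obtain ⟨m, rfl⟩ : ∃ m, n = m + 1 := ⟨n - 1, by omega⟩
  have hT := SkewHermitian.algebraMap_ne_zero ht
  rw [SkewHermitian.diagonal_form.1, SkewHermitian.diagonal_form.2]
  constructor
  · intro B hB hN
    obtain ⟨ε, b, hε, hb⟩ := SkewHermitian.exists_gram hp ht htsk m _ B (by simp) hB hN
    have hε0 : ε ≠ 0 := by
      rcases hε with rfl | rfl
      exacts [one_ne_zero, SkewHermitian.p_ne_zero']
    have hd : ∀ i : Fin (m + 1),
        algebraMap (Zp2 p) (Qp2 p) t * SkewHermitian.diagEntry ε i ≠ 0 := by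
      intro i
      refine mul_ne_zero hT ?_
      unfold SkewHermitian.diagEntry
      split_ifs
      exacts [hε0, one_ne_zero]
    have h := SkewHermitian.formEquiv_of_gram hB _ hd b hb
    rcases hε with rfl | rfl
    exacts [Or.inl h, Or.inr h]
  · intro h
    obtain ⟨d, hd⟩ := SkewHermitian.det_of_formEquiv h
    apply SkewHermitian.p_not_norm d
    simp only [Matrix.det_diagonal, Finset.prod_mul_distrib, Finset.prod_const, Fin.prod_univ_succ,
      SkewHermitian.diagEntry, Fin.val_zero, Fin.val_succ, Nat.succ_ne_zero, if_true, if_false,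
      one_pow, mul_one] at hd
    exact mul_left_cancel₀ (pow_ne_zero _ hT) (hd.trans (mul_comm _ _))
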